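/- Let ψ(t) = t² log^α(e+t) with α > 1 and let ψ* be its conjugate, so ψ*(s) ≍ s² log^{−α}(e+s). Then for every h ∈ (0, 1/e) the Luxemburg norm of the function y ↦ |x−y|^{−1} over the disk B_{2h}(x) in the Orlicz space L^{ψ*} satisfies ‖ |x−·|^{−1} ‖_{L^{ψ*}(B_{2h}(x))} ≤ C(α) log^{(1−α)/2}(1/h). -/

import Mathlib

/-!
The constant `C = exp (t - 1) ≥ 1` is chosen first, so large that `C ^ 2` beats a fixed multiple of
`(1 + log C) ^ α`. For `lam = C * log (1 / h) ^ ((1 - α) / 2)` one has `lam ≤ C`, since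
`log (1 / h) > 1`, and hence `log (1 / r) ≤ (1 + log C) * log (e + 1 / (lam * r))`. So the integrand
`ψs (r⁻¹ / lam)` is at most a constant times `lam⁻² * r⁻² * log (1 / r) ^ (-α)`. In polar coordinates
this majorant integrates explicitly, with the primitive `(-log r) ^ (1 - α) / (α - 1)` of
`r⁻¹ * (-log r) ^ (-α)`. Because `log (1 / (2 * h)) ≥ (1 - log 2) * log (1 / h)`, the result is a
constant times `lam⁻² * log (1 / h) ^ (1 - α)`, which the choice of `C` makes at most `1`; thus `lam`
is admissible in the Luxemburg norm.
-/

open MeasureTheory Set Real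

/-- At `r = 0` the junk values `log 0 = 0` and `0 ^ (1 - α) = 0` give the primitive its limit
value, so the fundamental theorem of calculus applies on the closed interval `[0, b]`. -/
lemma radial_integral (α : ℝ) (hα : 1 < α) (b : ℝ) (hb : 0 < b) (hb1 : b < 1) :
    IntegrableOn (fun r : ℝ => r⁻¹ * (-Real.log r) ^ (-α)) (Ioc 0 b) ∧
    ∫ r in Ioc 0 b, r⁻¹ * (-Real.log r) ^ (-α) = (-Real.log b) ^ (1 - α) / (α - 1) := by
  have hne : 1 - α ≠ 0 := by linarith
  have hne' : α - 1 ≠ 0 := by linarith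
  have hpos : ∀ x ∈ Ioc 0 b, 0 < -Real.log x := fun x hx => by
    have := Real.log_neg hx.1 (hx.2.trans_lt hb1)
    linarith
  have hd : ∀ x ∈ Ioc 0 b, HasDerivAt (fun r : ℝ => (-Real.log r) ^ (1 - α) / (α - 1))
      (x⁻¹ * (-Real.log x) ^ (-α)) x := fun x hx => by
    have h1 := ((Real.hasDerivAt_log hx.1.ne').neg.rpow_const (p := 1 - α)
      (Or.inl (hpos x hx).ne')).div_const (α - 1)
    refine h1.congr_deriv ?_
    rw [show 1 - α - 1 = -α by ring]
    simp only [Pi.neg_apply]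
    field_simp
    ring
  have hc : ContinuousOn (fun r : ℝ => (-Real.log r) ^ (1 - α) / (α - 1)) (Icc 0 b) := by
    intro x hx
    rcases hx.1.eq_or_lt with h0 | h0
    · subst h0
      have h2 : Filter.Tendsto (fun r : ℝ => (-Real.log r) ^ (1 - α) / (α - 1))
          (nhdsWithin 0 (Ioi 0)) (nhds 0) := by
        have h3 : Filter.Tendsto (fun r : ℝ => -Real.log r) (nhdsWithin 0 (Ioi 0)) Filter.atTop :=
          Filter.tendsto_neg_atBot_atTop.comp Real.tendsto_log_nhdsGT_zero
        have h4 := ((tendsto_rpow_neg_atTop (y := α - 1) (by linarith)).comp h3).div_const (α - 1)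
        simpa [Function.comp_def] using h4
      have h5 : ContinuousWithinAt (fun r : ℝ => (-Real.log r) ^ (1 - α) / (α - 1)) (Ioi 0) 0 := by
        unfold ContinuousWithinAt
        simpa [Real.zero_rpow hne] using h2
      exact (continuousWithinAt_Ioi_iff_Ici.mp h5).mono Icc_subset_Ici_self
    · exact (hd x ⟨h0, hx.2⟩).continuousAt.continuousWithinAt
  have hi : IntegrableOn (fun r : ℝ => r⁻¹ * (-Real.log r) ^ (-α)) (Ioc 0 b) :=
    intervalIntegral.integrableOn_deriv_of_nonneg hc
      (fun x hx => hd x (Ioo_subset_Ioc_self hx))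
      (fun x hx => mul_nonneg (inv_nonneg.2 hx.1.le)
        (Real.rpow_nonneg (hpos x (Ioo_subset_Ioc_self hx)).le _))
  refine ⟨hi, ?_⟩
  rw [← intervalIntegral.integral_of_le hb.le,
    intervalIntegral.integral_eq_sub_of_hasDerivAt_of_le hb.le hc
      (fun x hx => hd x (Ioo_subset_Ioc_self hx))
      ((intervalIntegrable_iff_integrableOn_Ioc_of_le hb.le).2 hi)]
  simp [Real.zero_rpow hne]

lemma planar_integral (α : ℝ) (hα : 1 < α) (b : ℝ) (hb : 0 < b) (hb1 : b < 1)
    (x : EuclideanSpace ℝ (Fin 2)) :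
    IntegrableOn (fun y => (‖x - y‖⁻¹) ^ 2 * (-Real.log ‖x - y‖) ^ (-α)) (Metric.ball x b) ∧
    ∫ y in Metric.ball x b, (‖x - y‖⁻¹) ^ 2 * (-Real.log ‖x - y‖) ^ (-α) =
      2 * volume.real (Metric.ball (0 : EuclideanSpace ℝ (Fin 2)) 1) *
        ((-Real.log b) ^ (1 - α) / (α - 1)) := by
  obtain ⟨hi, he⟩ := radial_integral α hα b hb hb1
  set g : ℝ → ℝ := (Iio b).indicator (fun r => (r⁻¹) ^ 2 * (-Real.log r) ^ (-α)) with hg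
  have hind : (Metric.ball x b).indicator
      (fun y => (‖x - y‖⁻¹) ^ 2 * (-Real.log ‖x - y‖) ^ (-α)) = fun y => g ‖x - y‖ := by
    ext y
    simp only [hg, indicator, Metric.mem_ball, mem_Iio, dist_comm y x, dist_eq_norm]
  have hrad : ∀ r ∈ Ioi (0 : ℝ), (r ^ (2 - 1) • g r) =
      (Iio b).indicator (fun r => r⁻¹ * (-Real.log r) ^ (-α)) r := fun r hr => by
    have : r ≠ 0 := (mem_Ioi.1 hr).ne'
    by_cases h : r ∈ Iio b
    · simp only [hg, indicator_of_mem h, smul_eq_mul, Nat.add_one_sub_one, pow_one]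
      field_simp
    · simp [hg, indicator_of_notMem h]
  have hset : Iio b ∩ Ioi 0 = Ioo 0 b := by ext; simp [and_comm]
  have hset' : Ioi 0 ∩ Iio b = Ioo 0 b := by ext; simp
  have hfin : Module.finrank ℝ (EuclideanSpace ℝ (Fin 2)) = 2 := by simp
  constructor
  · rw [← integrable_indicator_iff measurableSet_ball, hind]
    have : Integrable (fun y : EuclideanSpace ℝ (Fin 2) => g ‖y‖) volume := by
      rw [integrable_fun_norm_addHaar, hfin, integrableOn_congr_fun hrad measurableSet_Ioi,
        IntegrableOn, integrable_indicator_iff measurableSet_Iio, IntegrableOn,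
        Measure.restrict_restrict measurableSet_Iio, hset]
      exact hi.mono_set Ioo_subset_Ioc_self
    exact this.comp_sub_left x
  · rw [← integral_indicator measurableSet_ball, hind,
      integral_sub_left_eq_self (fun y => g ‖y‖) volume x, integral_fun_norm_addHaar, hfin,
      setIntegral_congr_fun measurableSet_Ioi hrad, setIntegral_indicator measurableSet_Iio, hset',
      ← integral_Ioc_eq_integral_Ioo, he]
    simp [mul_assoc]

/-- The pointwise comparison in which replacing `lam` by its upper bound `C` costs only a factor
depending on `C`. -/
lemma log_comparison (C lam r : ℝ) (hC : 1 ≤ C) (hl : 0 < lam) (hlC : lam ≤ C) (hr : 0 < r) :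
    -Real.log r ≤ (1 + Real.log C) * Real.log (Real.exp 1 + r⁻¹ / lam) := by
  have h0 : 0 ≤ Real.log C := Real.log_nonneg hC
  have hq : 0 < r⁻¹ / lam := by positivity
  have h1 : 1 ≤ Real.log (Real.exp 1 + r⁻¹ / lam) := by
    rw [Real.le_log_iff_exp_le (by positivity)]
    linarith
  have h2 : Real.log (r⁻¹ / lam) ≤ Real.log (Real.exp 1 + r⁻¹ / lam) :=
    Real.log_le_log hq (by linarith [Real.exp_pos 1])
  rw [Real.log_div (by positivity) hl.ne', Real.log_inv] at h2
  have h3 := Real.log_le_log hl hlC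
  nlinarith

lemma exists_constant (A α : ℝ) (hA : 0 < A) :
    ∃ C : ℝ, 1 ≤ C ∧ A * (1 + Real.log C) ^ α ≤ C ^ 2 := by
  have h := tendsto_rpow_mul_exp_neg_mul_atTop_nhds_zero α 2 (by norm_num)
  have h1 := h.eventually (eventually_lt_nhds (show (0 : ℝ) < Real.exp (-2) / A by positivity))
  obtain ⟨t, ht, ht1⟩ := (h1.and (Filter.eventually_ge_atTop 1)).exists
  refine ⟨Real.exp (t - 1), Real.one_le_exp (by linarith), ?_⟩
  rw [Real.log_exp, add_sub_cancel, ← Real.exp_nat_mul]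
  rw [lt_div_iff₀ hA] at ht
  have h2 : Real.exp ((2 : ℕ) * (t - 1)) = Real.exp (-2) * Real.exp (2 * t) := by
    rw [← Real.exp_add]; congr 1; push_cast; ring
  have h3 : Real.exp (-2 * t) * Real.exp (2 * t) = 1 := by
    rw [← Real.exp_add]; simp
  rw [h2]
  calc A * t ^ α = t ^ α * Real.exp (-2 * t) * A * Real.exp (2 * t) := by
        linear_combination (-(A * t ^ α)) * h3
    _ ≤ _ := by gcongr

/-- Luxemburg-norm bound for the Riesz kernel |x−·|⁻¹ in L^{ψ*}(B_{2h}(x)). -/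
theorem stmt_11 (α : ℝ) (hα : 1 < α) (ψs : ℝ → ℝ) (c₁ c₂ : ℝ)
    (hc₁ : 0 < c₁) (hc₂ : 0 < c₂)
    (hcomp : ∀ s : ℝ, 0 ≤ s →
      c₁ * s ^ 2 * (Real.log (Real.exp 1 + s)) ^ (-α) ≤ ψs s ∧
      ψs s ≤ c₂ * s ^ 2 * (Real.log (Real.exp 1 + s)) ^ (-α)) :
    ∃ C : ℝ, 0 < C ∧ ∀ h : ℝ, h ∈ Set.Ioo 0 (1 / Real.exp 1) →
      ∀ x : EuclideanSpace ℝ (Fin 2),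
        sInf {lam : ℝ | 0 < lam ∧
          (∫ y in Metric.ball x (2 * h), ψs (‖x - y‖⁻¹ / lam)) ≤ 1} ≤
          C * (Real.log (1 / h)) ^ ((1 - α) / 2) := by
  set K : ℝ := 2 * volume.real (Metric.ball (0 : EuclideanSpace ℝ (Fin 2)) 1) with hK
  have hKpos : 0 < K := by
    have : 0 < volume.real (Metric.ball (0 : EuclideanSpace ℝ (Fin 2)) 1) :=
      ENNReal.toReal_pos (Metric.measure_ball_pos volume _ one_pos).ne' measure_ball_lt_top.ne
    positivity
  have hlog2 : 0 < 1 - Real.log 2 := by linarith [Real.log_two_lt_d9]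
  have hα1 : 0 < α - 1 := by linarith
  obtain ⟨C, hC1, hC⟩ := exists_constant (K * c₂ * ((1 - Real.log 2) ^ (1 - α) / (α - 1))) α
    (by positivity)
  have hlogC : 0 ≤ Real.log C := Real.log_nonneg hC1
  have hCpos : 0 < C := by linarith
  refine ⟨C, hCpos, fun h hh x => ?_⟩
  have hh0 : 0 < h := hh.1
  set L := Real.log (1 / h) with hL
  have hLh : L = -Real.log h := by rw [hL, one_div, Real.log_inv]
  have hL1 : 1 < L := by
    rw [hL, Real.lt_log_iff_exp_lt (by positivity), lt_one_div (Real.exp_pos 1) hh0]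
    exact hh.2
  have hL0 : 0 < L := by linarith
  have h2L : -Real.log (2 * h) = L - Real.log 2 := by
    rw [Real.log_mul (by norm_num) hh0.ne', hLh]; ring
  have hlow : (1 - Real.log 2) * L ≤ -Real.log (2 * h) := by
    rw [h2L]
    nlinarith [Real.log_pos (show (1 : ℝ) < 2 by norm_num)]
  have hb1 : 2 * h < 1 := by
    have : Real.log (2 * h) < 0 := by nlinarith
    exact (Real.log_neg_iff (by positivity)).1 this
  set lam := C * L ^ ((1 - α) / 2) with hlam
  have hlpos : 0 < lam := by positivity
  have hlC : lam ≤ C :=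
    mul_le_of_le_one_right hCpos.le (Real.rpow_le_one_of_one_le_of_nonpos hL1.le (by linarith))
  have hlsq : lam ^ 2 = C ^ 2 * L ^ (1 - α) := by
    rw [hlam, mul_pow, ← Real.rpow_natCast (L ^ _), ← Real.rpow_mul hL0.le]
    congr 2
    push_cast; ring
  refine csInf_le ⟨0, fun l hl => hl.1.le⟩ ⟨hlpos, ?_⟩
  obtain ⟨hi, he⟩ := planar_integral α hα (2 * h) (by positivity) hb1 x
  set M := c₂ * (1 + Real.log C) ^ α * (lam ^ 2)⁻¹ with hM
  have hdom : ∀ y ∈ Metric.ball x (2 * h), ψs (‖x - y‖⁻¹ / lam) ≤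
      M * ((‖x - y‖⁻¹) ^ 2 * (-Real.log ‖x - y‖) ^ (-α)) := fun y hy => by
    rw [Metric.mem_ball, dist_comm, dist_eq_norm] at hy
    refine (hcomp _ (by positivity)).2.trans ?_
    rcases (norm_nonneg (x - y)).eq_or_lt with h0 | h0
    · simp [← h0]
    · set r := ‖x - y‖
      have hlr : 0 < -Real.log r := by linarith [Real.log_neg h0 (hy.trans hb1)]
      have hcmp := log_comparison C lam r hC1 hlpos hlC h0
      have hQ : 0 < Real.log (Real.exp 1 + r⁻¹ / lam) :=
        pos_of_mul_pos_right (hlr.trans_le hcmp) (by positivity)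
      have h1 := Real.rpow_le_rpow_of_nonpos hlr hcmp (show -α ≤ 0 by linarith)
      rw [Real.mul_rpow (by positivity) hQ.le, Real.rpow_neg (by positivity),
        inv_mul_le_iff₀ (by positivity)] at h1
      calc _ ≤ c₂ * (r⁻¹ / lam) ^ 2 * ((1 + Real.log C) ^ α * (-Real.log r) ^ (-α)) := by gcongr
        _ = _ := by rw [hM, div_pow]; ring
  have hnn : ∀ y, 0 ≤ ψs (‖x - y‖⁻¹ / lam) := fun y => by
    refine le_trans ?_ (hcomp _ (by positivity)).1
    have hq : 0 ≤ ‖x - y‖⁻¹ / lam := by positivity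
    have : 0 ≤ Real.log (Real.exp 1 + ‖x - y‖⁻¹ / lam) :=
      Real.log_nonneg (by linarith [Real.add_one_le_exp (1 : ℝ)])
    positivity
  -- No measurability of `ψs` is needed: a non-integrable integrand has Bochner integral `0`.
  calc ∫ y in Metric.ball x (2 * h), ψs (‖x - y‖⁻¹ / lam)
      ≤ ∫ y in Metric.ball x (2 * h), M * ((‖x - y‖⁻¹) ^ 2 * (-Real.log ‖x - y‖) ^ (-α)) :=
        integral_mono_of_nonneg (Filter.Eventually.of_forall hnn) (hi.const_mul M)
          ((ae_restrict_mem measurableSet_ball).mono hdom)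
    _ = M * (K * ((-Real.log (2 * h)) ^ (1 - α) / (α - 1))) := by
        rw [integral_const_mul, he]
    _ ≤ M * (K * (((1 - Real.log 2) * L) ^ (1 - α) / (α - 1))) := by
        have := Real.rpow_le_rpow_of_nonpos (by positivity) hlow (show 1 - α ≤ 0 by linarith)
        gcongr
    _ = (K * c₂ * ((1 - Real.log 2) ^ (1 - α) / (α - 1)) * (1 + Real.log C) ^ α) / C ^ 2 := by
        have : L ^ (1 - α) ≠ 0 := by positivity
        rw [hM, hlsq, Real.mul_rpow hlog2.le hL0.le]
        field_simp
    _ ≤ 1 := div_le_one_of_le₀ hC (by positivity)
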